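/- Under the potential-outcomes IV setup, suppose M > 0 with |Y(1)| ≤ M and |Y(0)| ≤ M almost surely, b > c ≥ 0 (so cov(D,Z) > 0 and b > 0), β < 0, and 2·M·c < (b − c)·|β|. Then μ1 < 0, i.e. sign(μ1) = sign(β). (If c > 0 this uses no restriction at all on μ2 beyond the boundedness of outcomes.) -/

import Mathlib

/-!
Independence makes conditioning on `Z = z` invisible to functions of the potential quadruple
(`integral_cond_of_indepFun`), so the numerator of `beta` is `E[(Y1 - Y0) * (D1 - D0)]` and its
denominator is `E[D1 - D0]`. As `D1 - D0` is the indicator of the compliers minus that of the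
defiers (`integral_mul_sub_eq`), this reads
`(b - c) * beta = b * mu1 - E[(Y1 - Y0); defiers]`, and the last expectation is at most
`2 * M * c` in absolute value. Hence `b * mu1 ≤ (b - c) * beta + 2 * M * c < 0`.
-/

open MeasureTheory ProbabilityTheory

set_option linter.unusedVariables false

/-- If `Z` is independent of `T` and `W` agrees with `g ∘ T` on `{Z = z}`, then the conditional
mean of `W` given `Z = z` is the unconditional mean of `g ∘ T`. No integrability is needed, since
`T` has the same law under `μ` and under `μ[|Z = z]`. -/
lemma integral_cond_of_indepFun {Ω α : Type*} [MeasurableSpace Ω] [MeasurableSpace α]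
    (μ : Measure Ω) [IsProbabilityMeasure μ] {Z : Ω → ℝ} {T : Ω → α}
    (hZ : Measurable Z) (hT : Measurable T) (h : IndepFun Z T μ) (z : ℝ)
    (hz : μ {ω | Z ω = z} ≠ 0) {g : α → ℝ} (hg : Measurable g) {W : Ω → ℝ}
    (hW : ∀ ω, Z ω = z → W ω = g (T ω)) :
    ∫ ω, W ω ∂(μ[|{ω | Z ω = z}]) = ∫ ω, g (T ω) ∂μ := by
  have hs : MeasurableSet {ω | Z ω = z} := hZ (measurableSet_singleton z)
  have hmap : (μ[|{ω | Z ω = z}]).map T = μ.map T := by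
    ext A hA
    rw [Measure.map_apply hT hA, Measure.map_apply hT hA, cond_apply hs]
    have := h.measure_inter_preimage_eq_mul {z} A (measurableSet_singleton z) hA
    change μ ({ω | Z ω = z} ∩ T ⁻¹' A) = μ {ω | Z ω = z} * _ at this
    rw [this, ← mul_assoc, ENNReal.inv_mul_cancel hz (measure_ne_top _ _), one_mul]
  have hae : W =ᵐ[μ[|{ω | Z ω = z}]] fun ω => g (T ω) := by
    filter_upwards [ae_cond_mem hs] with ω hω using hW ω hω
  rw [integral_congr_ae hae, ← integral_map hT.aemeasurable hg.aestronglyMeasurable, hmap,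
    integral_map hT.aemeasurable hg.aestronglyMeasurable]

lemma integral_mul_sub_eq {Ω : Type*} [MeasurableSpace Ω] (μ : Measure Ω) {D1 D0 X : Ω → ℝ}
    (hD1m : Measurable D1) (hD0m : Measurable D0)
    (hD1 : ∀ ω, D1 ω = 0 ∨ D1 ω = 1) (hD0 : ∀ ω, D0 ω = 0 ∨ D0 ω = 1) (hX : Integrable X μ) :
    ∫ ω, X ω * (D1 ω - D0 ω) ∂μ =
      (∫ ω in {ω | D1 ω = 1 ∧ D0 ω = 0}, X ω ∂μ) - ∫ ω in {ω | D1 ω = 0 ∧ D0 ω = 1}, X ω ∂μ := by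
  have hB : MeasurableSet {ω | D1 ω = 1 ∧ D0 ω = 0} :=
    (hD1m (measurableSet_singleton 1)).inter (hD0m (measurableSet_singleton 0))
  have hC : MeasurableSet {ω | D1 ω = 0 ∧ D0 ω = 1} :=
    (hD1m (measurableSet_singleton 0)).inter (hD0m (measurableSet_singleton 1))
  rw [← integral_indicator hB, ← integral_indicator hC,
    ← integral_sub (hX.indicator hB) (hX.indicator hC)]
  refine integral_congr_ae (.of_forall fun ω => ?_)
  rcases hD1 ω with h1 | h1 <;> rcases hD0 ω with h0 | h0 <;>
    simp [Set.indicator, h1, h0]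

theorem stmt10 {Ω : Type*} [MeasurableSpace Ω] (μ : Measure Ω) [IsProbabilityMeasure μ]
    (Y1 Y0 Z D1 D0 : Ω → ℝ)
    (hY1m : Measurable Y1) (hY0m : Measurable Y0) (hZm : Measurable Z)
    (hD1m : Measurable D1) (hD0m : Measurable D0)
    (hZ01 : ∀ ω, Z ω = 0 ∨ Z ω = 1)
    (hD101 : ∀ ω, D1 ω = 0 ∨ D1 ω = 1)
    (hD001 : ∀ ω, D0 ω = 0 ∨ D0 ω = 1)
    (hZpos : 0 < μ {ω | Z ω = 1})
    (hZlt : μ {ω | Z ω = 1} < 1)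
    (hindep : IndepFun Z (fun ω => (Y1 ω, Y0 ω, D1 ω, D0 ω)) μ)
    (D Y : Ω → ℝ)
    (hDdef : D = fun ω => D1 ω * Z ω + D0 ω * (1 - Z ω))
    (hYdef : Y = fun ω => Y1 ω * D ω + Y0 ω * (1 - D ω))
    (a b c : ℝ)
    (ha : a = (μ {ω | D1 ω = 1 ∧ D0 ω = 1}).toReal)
    (hb : b = (μ {ω | D1 ω = 1 ∧ D0 ω = 0}).toReal)
    (hc : c = (μ {ω | D1 ω = 0 ∧ D0 ω = 1}).toReal)
    (k1 k2 : ℝ)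
    (hk1 : k1 = ∫ ω, D ω ∂(μ[|{ω | Z ω = 1}]))
    (hk2 : k2 = ∫ ω, D ω ∂(μ[|{ω | Z ω = 0}]))
    (mu1 mu2 : ℝ)
    (hmu1 : mu1 = ∫ ω, (Y1 ω - Y0 ω) ∂(μ[|{ω | D1 ω = 1 ∧ D0 ω = 0}]))
    (hmu2 : mu2 = ∫ ω, (Y1 ω - Y0 ω) ∂(μ[|{ω | D1 ω = 0 ∧ D0 ω = 1}]))
    (beta : ℝ)
    (hbeta : beta = ((∫ ω, Y ω ∂(μ[|{ω | Z ω = 1}])) - ∫ ω, Y ω ∂(μ[|{ω | Z ω = 0}])) / (k1 - k2))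
    (M : ℝ) (hM : 0 < M)
    (hbound : ∀ᵐ ω ∂μ, |Y1 ω| ≤ M ∧ |Y0 ω| ≤ M)
    (hc0 : 0 ≤ c) (hcb : c < b) (hbetaneg : beta < 0)
    (hkey : 2 * M * c < (b - c) * |beta|) :
    mu1 < 0 := by
  have hT : Measurable (fun ω => (Y1 ω, Y0 ω, D1 ω, D0 ω)) := by fun_prop
  have hz1 : μ {ω | Z ω = 1} ≠ 0 := hZpos.ne'
  have hz0 : μ {ω | Z ω = 0} ≠ 0 := by
    intro h0
    have hs : MeasurableSet {ω | Z ω = 1} := hZm (measurableSet_singleton 1)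
    have hcompl : {ω | Z ω = 0} = {ω | Z ω = 1}ᶜ := by
      ext ω
      rcases hZ01 ω with h | h <;> simp [h]
    rw [hcompl, prob_compl_eq_zero_iff hs] at h0
    exact hZlt.ne h0
  have hD1b : ∀ ω, ‖D1 ω‖ ≤ 1 := fun ω => by rcases hD101 ω with h | h <;> simp [h]
  have hD0b : ∀ ω, ‖D0 ω‖ ≤ 1 := fun ω => by rcases hD001 ω with h | h <;> simp [h]
  have iY1 : Integrable Y1 μ := .of_bound hY1m.aestronglyMeasurable M (hbound.mono fun ω h => h.1)
  have iY0 : Integrable Y0 μ := .of_bound hY0m.aestronglyMeasurable M (hbound.mono fun ω h => h.2)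
  have iD1 : Integrable D1 μ := .of_bound hD1m.aestronglyMeasurable 1 (.of_forall hD1b)
  have iD0 : Integrable D0 μ := .of_bound hD0m.aestronglyMeasurable 1 (.of_forall hD0b)
  have iX : Integrable (fun ω => Y1 ω - Y0 ω) μ := iY1.sub iY0
  have iX1 : Integrable (fun ω => Y0 ω + (Y1 ω - Y0 ω) * D1 ω) μ :=
    iY0.add (iX.mul_bdd (c := 1) hD1m.aestronglyMeasurable (.of_forall hD1b))
  have iX0 : Integrable (fun ω => Y0 ω + (Y1 ω - Y0 ω) * D0 ω) μ :=
    iY0.add (iX.mul_bdd (c := 1) hD0m.aestronglyMeasurable (.of_forall hD0b))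
  have hk : k1 - k2 = b - c := by
    rw [hk1, hk2,
      integral_cond_of_indepFun μ hZm hT hindep 1 hz1 (g := fun t => t.2.2.1) (by fun_prop)
        (fun ω h => by simp [hDdef, h]),
      integral_cond_of_indepFun μ hZm hT hindep 0 hz0 (g := fun t => t.2.2.2) (by fun_prop)
        (fun ω h => by simp [hDdef, h]), ← integral_sub iD1 iD0]
    have := integral_mul_sub_eq μ hD1m hD0m hD101 hD001 (integrable_const (1 : ℝ))
    simpa [hb, hc, Measure.real] using this
  have hY : (∫ ω, Y ω ∂(μ[|{ω | Z ω = 1}])) - ∫ ω, Y ω ∂(μ[|{ω | Z ω = 0}]) =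
      (∫ ω in {ω | D1 ω = 1 ∧ D0 ω = 0}, (Y1 ω - Y0 ω) ∂μ) -
        ∫ ω in {ω | D1 ω = 0 ∧ D0 ω = 1}, (Y1 ω - Y0 ω) ∂μ := by
    rw [integral_cond_of_indepFun μ hZm hT hindep 1 hz1
        (g := fun t => t.2.1 + (t.1 - t.2.1) * t.2.2.1) (by fun_prop)
        (fun ω h => by simp [hYdef, hDdef, h]; ring),
      integral_cond_of_indepFun μ hZm hT hindep 0 hz0
        (g := fun t => t.2.1 + (t.1 - t.2.1) * t.2.2.2) (by fun_prop)
        (fun ω h => by simp [hYdef, hDdef, h]; ring),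
      ← integral_sub iX1 iX0, ← integral_mul_sub_eq μ hD1m hD0m hD101 hD001 iX]
    congr 1
    ext ω
    ring
  have hbpos : 0 < b := hc0.trans_lt hcb
  have hmu : b * mu1 = ∫ ω in {ω | D1 ω = 1 ∧ D0 ω = 0}, (Y1 ω - Y0 ω) ∂μ := by
    rw [hmu1, ProbabilityTheory.cond, integral_smul_measure, ENNReal.toReal_inv, ← hb, smul_eq_mul,
      mul_inv_cancel_left₀ hbpos.ne']
  have hCb : ∫ ω in {ω | D1 ω = 0 ∧ D0 ω = 1}, (Y1 ω - Y0 ω) ∂μ ≤ 2 * M * c := by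
    have := norm_setIntegral_le_of_norm_le_const_ae (μ := μ)
      (s := {ω | D1 ω = 0 ∧ D0 ω = 1}) (f := fun ω => Y1 ω - Y0 ω) (C := 2 * M)
      (measure_lt_top _ _) (ae_restrict_of_ae (hbound.mono fun ω h => by
        rw [Real.norm_eq_abs]
        linarith [abs_sub (Y1 ω) (Y0 ω), h.1, h.2]))
    rw [hc]
    exact (Real.le_norm_self _).trans this
  rw [hY, hk, ← hmu, eq_div_iff (sub_pos.2 hcb).ne'] at hbeta
  rw [abs_of_neg hbetaneg] at hkey
  by_contra! hneg
  nlinarith [mul_nonneg hbpos.le hneg]
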